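/- arXiv:1209.6532 — 3 statements merged into one kernel-verified Lean document; each statement's English description precedes it below -/
import Mathlib

section
/- Let d ≥ 2 be an integer, let ζ ∈ ℂ be a primitive d-th root of unity, and let h₁, …, h_m and n₁, …, n_m be integers. Assume: (i) there exist integers α₁, …, α_m with α₁h₁ + … + α_m h_m = 1 and d ∣ (α₁n₁ + … + α_m n_m); and (ii) there exists an index i₀ with d ∤ n_{i₀}. Then every common divisor in ℂ[T,T⁻¹] of the elements ζ^{n₁}·T^{h₁} − 1, …, ζ^{n_m}·T^{h_m} − 1 is a unit. -/
open LaurentPolynomial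

/-!
The pairs `(u, k)` for which `u T^k ≡ 1` modulo an ideal `I` of `R[T;T⁻¹]` form a subgroup of
`Rˣ × ℤ`. If it contains all `(uᵢ, hᵢ)`, then it contains `∏ (uᵢ, hᵢ)^αᵢ = (1, 1)`, that is
`T ≡ 1`, and therefore every `(uᵢ, 0)`, that is `uᵢ ≡ 1`. For `I = (g)` over a field, some
`uᵢ ≠ 1` makes `g` a divisor of the nonzero constant `uᵢ - 1`.
-/

theorem zpow_sum_eq_prod_zpow {G ι : Type*} [CommGroup G] (x : G) (s : Finset ι) (f : ι → ℤ) :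
    x ^ ∑ i ∈ s, f i = ∏ i ∈ s, x ^ f i := by
  simpa only [zpowersHom_apply, ofAdd_sum, toAdd_prod, toAdd_ofAdd] using
    map_prod (zpowersHom G x) (fun i => Multiplicative.ofAdd (f i)) s

section ProdInt

variable {A ι : Type*} [CommGroup A] [Fintype ι] {H : Subgroup (A × Multiplicative ℤ)}
  {u : ι → A} {h α : ι → ℤ}

theorem one_ofAdd_one_mem_of_forall_mem (hα : ∑ i, α i * h i = 1) (hu : ∏ i, u i ^ α i = 1)
    (hH : ∀ i, (u i, Multiplicative.ofAdd (h i)) ∈ H) :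
    (1, Multiplicative.ofAdd 1) ∈ H := by
  have prod_eq : ∏ i, (u i, Multiplicative.ofAdd (h i)) ^ α i = (1, Multiplicative.ofAdd 1) := by
    refine Prod.ext ?_ ?_
    · simpa only [Prod.fst_prod, Prod.pow_fst] using hu
    · simpa only [Prod.snd_prod, Prod.pow_snd, ← ofAdd_zsmul, ← ofAdd_sum, smul_eq_mul]
        using congrArg Multiplicative.ofAdd hα
  exact prod_eq ▸ H.prod_mem fun i _ => H.zpow_mem (hH i) (α i)

theorem mk_one_mem_of_forall_mem (hα : ∑ i, α i * h i = 1) (hu : ∏ i, u i ^ α i = 1)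
    (hH : ∀ i, (u i, Multiplicative.ofAdd (h i)) ∈ H) (i : ι) : (u i, 1) ∈ H := by
  have generator_mem := one_ofAdd_one_mem_of_forall_mem hα hu hH
  have quotient_eq :
      (u i, Multiplicative.ofAdd (h i)) / (1, Multiplicative.ofAdd 1) ^ h i = (u i, 1) := by
    ext <;> simp [← ofAdd_zsmul]
  exact quotient_eq ▸ H.div_mem (hH i) (H.zpow_mem generator_mem (h i))

end ProdInt

section MonomialUnit

variable {R : Type*} [CommRing R]

/-- The unit `u T^k` of `R[T;T⁻¹]`, as a homomorphism in `(u, k) : Rˣ × ℤ`; the exponents are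
written multiplicatively. -/
noncomputable def monomialUnit : Rˣ × Multiplicative ℤ →* R[T;T⁻¹]ˣ :=
  (Units.map (C : R →+* R[T;T⁻¹]).toMonoidHom).coprod (AddMonoidAlgebra.of R ℤ).toHomUnits

theorem val_monomialUnit (u : Rˣ) (k : ℤ) :
    (monomialUnit (u, Multiplicative.ofAdd k) : R[T;T⁻¹]) = C (u : R) * T k :=
  rfl

/-- The group of pairs `(u, k)` with `u T^k ≡ 1` modulo the ideal `I`. -/
noncomputable def monomialCongruenceSubgroup (I : Ideal R[T;T⁻¹]) :
    Subgroup (Rˣ × Multiplicative ℤ) :=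
  ((Units.map (Ideal.Quotient.mk I).toMonoidHom).comp monomialUnit).ker

theorem mem_monomialCongruenceSubgroup {I : Ideal R[T;T⁻¹]} {u : Rˣ} {k : ℤ} :
    (u, Multiplicative.ofAdd k) ∈ monomialCongruenceSubgroup I ↔ C (u : R) * T k - 1 ∈ I := by
  rw [← Ideal.Quotient.mk_eq_mk_iff_sub_mem, map_one, ← val_monomialUnit]
  exact Units.ext_iff

theorem C_sub_one_mem_of_forall_C_mul_T_sub_one_mem {ι : Type*} [Fintype ι]
    {I : Ideal R[T;T⁻¹]} {u : ι → Rˣ} {h α : ι → ℤ}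
    (hα : ∑ i, α i * h i = 1) (hu : ∏ i, u i ^ α i = 1)
    (hI : ∀ i, C (u i : R) * T (h i) - 1 ∈ I) (i : ι) : C ((u i : R) - 1) ∈ I := by
  have mem_subgroup : (u i, Multiplicative.ofAdd 0) ∈ monomialCongruenceSubgroup I :=
    mk_one_mem_of_forall_mem hα hu (fun j => mem_monomialCongruenceSubgroup.2 (hI j)) i
  simpa only [T_zero, mul_one, map_sub, map_one] using
    mem_monomialCongruenceSubgroup.1 mem_subgroup

end MonomialUnit

section Field

variable {K ι : Type*} [Field K] [Fintype ι]

theorem isUnit_of_forall_dvd_C_mul_T_sub_one {u : ι → Kˣ} {h α : ι → ℤ}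
    (hα : ∑ i, α i * h i = 1) (hu : ∏ i, u i ^ α i = 1) (hne : ∃ i, u i ≠ 1)
    {g : K[T;T⁻¹]} (hg : ∀ i, g ∣ C (u i : K) * T (h i) - 1) : IsUnit g := by
  obtain ⟨i, hi⟩ := hne
  have g_dvd : g ∣ C ((u i : K) - 1) := Ideal.mem_span_singleton.1 <|
    C_sub_one_mem_of_forall_C_mul_T_sub_one_mem hα hu
      (fun j => Ideal.mem_span_singleton.2 (hg j)) i
  have const_ne_zero : (u i : K) - 1 ≠ 0 := sub_ne_zero.2 (Units.val_eq_one.not.2 hi)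
  exact isUnit_of_dvd_unit g_dvd (const_ne_zero.isUnit.map C)

theorem common_divisor_isUnit_of_torsion_knot_general {d : ℕ} {ζ : K} (hζ : IsPrimitiveRoot ζ d)
    (hζ₀ : ζ ≠ 0) {h n : ι → ℤ}
    (hi : ∃ α : ι → ℤ, ∑ i, α i * h i = 1 ∧ (d : ℤ) ∣ ∑ i, α i * n i)
    (hii : ∃ i₀, ¬ (d : ℤ) ∣ n i₀)
    {g : K[T;T⁻¹]} (hg : ∀ i, g ∣ C (ζ ^ n i) * T (h i) - 1) : IsUnit g := by
  obtain ⟨α, hα, hdvd⟩ := hi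
  obtain ⟨i₀, hi₀⟩ := hii
  lift ζ to Kˣ using hζ₀.isUnit
  have zpow_eq_one_iff (k : ℤ) : ζ ^ k = 1 ↔ (d : ℤ) ∣ k :=
    (IsPrimitiveRoot.coe_units_iff.1 hζ).zpow_eq_one_iff_dvd k
  have prod_eq_one : ∏ i, (ζ ^ n i) ^ α i = 1 := by
    simp only [← zpow_mul, mul_comm (n _), ← zpow_sum_eq_prod_zpow]
    exact (zpow_eq_one_iff _).2 hdvd
  exact isUnit_of_forall_dvd_C_mul_T_sub_one hα prod_eq_one
    ⟨i₀, (zpow_eq_one_iff _).not.2 hi₀⟩ (by simpa only [Units.val_zpow_eq_zpow_val] using hg)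

end Field

/-- Let `d ≥ 2`, `ζ ∈ ℂ` a primitive `d`-th root of unity, and `h₁,…,h_m`, `n₁,…,n_m`
integers.  Assume (i) there are integers `αᵢ` with `∑ αᵢhᵢ = 1` and `d ∣ ∑ αᵢnᵢ`, and
(ii) there is `i₀` with `d ∤ n_{i₀}`.  Then every common divisor in `ℂ[T,T⁻¹]` of the
elements `ζ^{nᵢ}·T^{hᵢ} − 1` is a unit. -/
theorem common_divisor_isUnit_of_torsion_knot
    (d : ℕ) (hd : 2 ≤ d) (ζ : ℂ) (hζ : IsPrimitiveRoot ζ d)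
    (m : ℕ) (h n : Fin m → ℤ)
    (hi : ∃ α : Fin m → ℤ, (∑ i, α i * h i) = 1 ∧ (d : ℤ) ∣ ∑ i, α i * n i)
    (hii : ∃ i₀, ¬ (d : ℤ) ∣ n i₀)
    (g : LaurentPolynomial ℂ)
    (hg : ∀ i, g ∣ (C (ζ ^ (n i)) * T (h i) - 1)) :
    IsUnit g :=
  common_divisor_isUnit_of_torsion_knot_general hζ (hζ.ne_zero (by omega)) hi hii hg
end

section
/- Let ν ≥ 2 and for i = 1, …, m let h_i ∈ ℤ^ν be vectors that generate ℤ^ν as a group. Then in the group algebra ℂ[ℤ^ν], every common divisor of the elements x^{h₁} − 1, …, x^{h_m} − 1 is a unit. -/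
/-!
The exponents `v` with `d ∣ x^v - 1` form a subgroup, so a common divisor `d` of the given elements
divides `x^v - 1` for every `v ∈ ℤ^ν`. Forgetting the `i`-th coordinate maps `ℂ[ℤ^ν]` onto the
domain `ℂ[ℤ^(ν-1)]` with kernel generated by `x^{e_i} - 1`, which is therefore prime. For `j ≠ i`
it does not divide `x^{e_j} - 1`, whose image is nonzero, so these two elements are coprime.
-/

open AddMonoidAlgebra

section Divisibility

variable {R M N G H : Type*} [Ring R] [AddMonoid M] [AddMonoid N] [AddGroup G] [AddGroup H]

theorem single_sub_one_eq_zero_iff [Nontrivial R] {v : M} :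
    (single v 1 - 1 : AddMonoidAlgebra R M) = 0 ↔ v = 0 := by
  rw [sub_eq_zero, one_def, single_left_inj one_ne_zero]

theorem mapDomainRingHom_single_sub_one (φ : M →+ N) (v : M) :
    mapDomainRingHom R φ (single v 1 - 1) = single (φ v) 1 - 1 := by
  rw [map_sub, map_one, mapDomainRingHom_apply, mapDomain_single]

theorem dvd_single_sub_one_of_mem_closure {d : AddMonoidAlgebra R G} {S : Set G}
    (hd : ∀ v ∈ S, d ∣ single v 1 - 1) {v : G} (hv : v ∈ AddSubgroup.closure S) :
    d ∣ single v 1 - 1 := by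
  induction hv using AddSubgroup.closure_induction with
  | mem v hv => exact hd v hv
  | zero => simp [← one_def]
  | add v w _ _ hv hw =>
    have split : (single (v + w) 1 - 1 : AddMonoidAlgebra R G) =
        (single v 1 - 1) * single w 1 + (single w 1 - 1) := by
      simp [sub_mul, single_mul_single]
    exact split ▸ dvd_add (hv.mul_right _) hw
  | neg v _ hv =>
    have factor : (single (-v) 1 - 1 : AddMonoidAlgebra R G) =
        -((single v 1 - 1) * single (-v) 1) := by
      simp [sub_mul, single_mul_single, ← one_def]
    exact factor ▸ (hv.mul_right _).neg_right

theorem single_sub_one_dvd_single_sub_single {u v w : G}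
    (hvw : v - w ∈ AddSubgroup.zmultiples u) (c : R) :
    (single u 1 - 1 : AddMonoidAlgebra R G) ∣ single v c - single w c := by
  have factor : (single v c - single w c : AddMonoidAlgebra R G) =
      (single (v - w) 1 - 1) * single w c := by
    simp [sub_mul, single_mul_single]
  rw [AddSubgroup.zmultiples_eq_closure] at hvw
  exact factor ▸ (dvd_single_sub_one_of_mem_closure (by simp) hvw).mul_right _

theorem single_sub_one_dvd_sub_mapDomain {u : G} {τ : G → G}
    (hτ : ∀ v, v - τ v ∈ AddSubgroup.zmultiples u) (f : AddMonoidAlgebra R G) :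
    single u 1 - 1 ∣ f - mapDomain τ f := by
  induction f using AddMonoidAlgebra.induction_linear with
  | zero => simp
  | add f g hf hg =>
    rw [mapDomain_add, add_sub_add_comm]
    exact dvd_add hf hg
  | single v c =>
    rw [mapDomain_single]
    exact single_sub_one_dvd_single_sub_single (hτ v) c

theorem single_sub_one_dvd_iff_mapDomainRingHom_eq_zero {φ : G →+ H} {u : G}
    (hφ : φ.ker = AddSubgroup.zmultiples u) {f : AddMonoidAlgebra R G} :
    single u 1 - 1 ∣ f ↔ mapDomainRingHom R φ f = 0 := by
  constructor
  · rintro ⟨c, rfl⟩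
    have hu : φ u = 0 := by
      rw [← AddMonoidHom.mem_ker, hφ]
      exact AddSubgroup.mem_zmultiples u
    rw [map_mul, mapDomainRingHom_single_sub_one, hu, ← one_def, sub_self, zero_mul]
  · intro hf
    -- Any set-theoretic section of `φ` moves each exponent within its coset of `ℤ u`.
    let s : H → G := Function.invFun φ
    have hs (v : G) : v - s (φ v) ∈ AddSubgroup.zmultiples u := by
      rw [← hφ, AddMonoidHom.mem_ker, map_sub, Function.invFun_eq (f := φ) ⟨v, rfl⟩, sub_self]
    have hsf : mapDomain (s ∘ φ) f = 0 :=
      calc mapDomain (s ∘ φ) f = mapDomain s (mapDomainRingHom R φ f) := by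
            ext; simp [Finsupp.mapDomain_comp]
        _ = 0 := by rw [hf, mapDomain_zero]
    simpa only [hsf, sub_zero] using single_sub_one_dvd_sub_mapDomain (τ := s ∘ φ) hs f

end Divisibility

section Coprimality

variable {R G H : Type*} [CommRing R] [IsDomain R] [AddCommGroup G]
  [AddGroup H] [UniqueSums H] {φ : G →+ H} {u v : G}

theorem prime_single_sub_one (hφ : φ.ker = AddSubgroup.zmultiples u) (hu : u ≠ 0) :
    Prime (single u 1 - 1 : AddMonoidAlgebra R G) := by
  have span_eq_ker : Ideal.span {(single u 1 - 1 : AddMonoidAlgebra R G)} =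
      RingHom.ker (mapDomainRingHom R φ) := by
    ext f
    rw [Ideal.mem_span_singleton, RingHom.mem_ker,
      single_sub_one_dvd_iff_mapDomainRingHom_eq_zero hφ]
  rw [← Ideal.span_singleton_prime (single_sub_one_eq_zero_iff.not.2 hu), span_eq_ker]
  exact RingHom.ker_isPrime _

theorem isRelPrime_single_sub_one [UniqueSums G] (hφ : φ.ker = AddSubgroup.zmultiples u)
    (hu : u ≠ 0) (hv : φ v ≠ 0) :
    IsRelPrime (single u 1 - 1 : AddMonoidAlgebra R G) (single v 1 - 1) := by
  rw [(prime_single_sub_one hφ hu).irreducible.isRelPrime_iff_not_dvd,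
    single_sub_one_dvd_iff_mapDomainRingHom_eq_zero hφ, mapDomainRingHom_single_sub_one,
    single_sub_one_eq_zero_iff]
  exact hv

end Coprimality

section IntegerVectors

variable {ι : Type*}

/-- The projection `ℤ^ι → ℤ^(ι ∖ {i})` forgetting the `i`-th coordinate. -/
def forgetCoord (i : ι) : (ι → ℤ) →+ ({j // j ≠ i} → ℤ) :=
  (LinearMap.funLeft ℤ ℤ Subtype.val).toAddMonoidHom

theorem ker_forgetCoord [DecidableEq ι] (i : ι) :
    (forgetCoord i).ker = AddSubgroup.zmultiples (Pi.single i 1) := by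
  apply le_antisymm
  · intro v hv
    refine AddSubgroup.mem_zmultiples_iff.2 ⟨v i, ?_⟩
    ext j
    rcases eq_or_ne j i with rfl | hji
    · simp
    · have hvj : v j = 0 := congrFun hv ⟨j, hji⟩
      simp [hji, hvj]
  · refine AddSubgroup.zmultiples_le_of_mem ?_
    ext j
    simp [forgetCoord, j.2]

theorem forgetCoord_single_ne_zero [DecidableEq ι] {i j : ι} (hji : j ≠ i) :
    forgetCoord i (Pi.single j 1) ≠ 0 := by
  intro h
  simpa [forgetCoord] using congrFun h ⟨j, hji⟩

end IntegerVectors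

theorem common_divisor_isUnit_of_generating_exponents_general
    {R ι κ : Type*} [CommRing R] [IsDomain R] [Nontrivial ι] {h : κ → (ι → ℤ)}
    (hgen : AddSubgroup.closure (Set.range h) = ⊤) {g : AddMonoidAlgebra R (ι → ℤ)}
    (hg : ∀ k, g ∣ single (h k) 1 - 1) :
    IsUnit g := by
  classical
  have g_dvd (v : ι → ℤ) : g ∣ single v 1 - 1 :=
    dvd_single_sub_one_of_mem_closure (Set.forall_mem_range.2 hg) (hgen ▸ AddSubgroup.mem_top v)
  obtain ⟨i, j, hij⟩ := exists_pair_ne ι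
  exact isRelPrime_single_sub_one (ker_forgetCoord i) (by simp)
    (forgetCoord_single_ne_zero hij.symm) (g_dvd _) (g_dvd _)

/-- Let `ν ≥ 2` and let `h₁,…,h_m ∈ ℤ^ν` generate `ℤ^ν` as a group.  Then in the group
algebra `ℂ[ℤ^ν]`, every common divisor of the elements `x^{h₁} − 1, …, x^{h_m} − 1` is a
unit. -/
theorem common_divisor_isUnit_of_generating_exponents
    (ν : ℕ) (hν : 2 ≤ ν) (m : ℕ) (h : Fin m → (Fin ν → ℤ))
    (hgen : AddSubgroup.closure (Set.range h) = (⊤ : AddSubgroup (Fin ν → ℤ)))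
    (g : AddMonoidAlgebra ℂ (Fin ν → ℤ))
    (hg : ∀ i, g ∣ (AddMonoidAlgebra.single (h i) (1 : ℂ) - 1)) :
    IsUnit g := by
  have : Nontrivial (Fin ν) := Fin.nontrivial_iff_two_le.2 hν
  exact common_divisor_isUnit_of_generating_exponents_general hgen hg
end

section
/- Let ν ≥ 1, let d ≥ 2 be an integer, let ζ ∈ ℂ be a primitive d-th root of unity, and for i = 1, …, m let h_i ∈ ℤ^ν and n_i ∈ ℤ be such that the elements (h_i, n_i mod d) generate the group ℤ^ν × ℤ/dℤ. Then in the group algebra ℂ[ℤ^ν], every common divisor of the elements ζ^{n₁}·x^{h₁} − 1, …, ζ^{n_m}·x^{h_m} − 1 is a unit. -/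
/-!
The elements `a` of a group `G` with `ψ a ≡ 1` modulo `g` form a subgroup, for every character
`ψ : G → S` into a commutative ring. Apply this to the character `(h, k) ↦ ζ ^ k • x ^ h` of
`ℤ ^ ν × ℤ / d`: since `g` divides `ψ - 1` on generators, it divides `ψ - 1` at the torsion element
`(0, 1)`, where `ψ - 1` is the nonzero constant `ζ - 1`.
-/

theorem dvd_addChar_sub_one_of_mem_closure {G S : Type*} [AddGroup G] [CommRing S]
    (ψ : AddChar G S) {g : S} {s : Set G} (hs : ∀ x ∈ s, g ∣ ψ x - 1)
    {x : G} (hx : x ∈ AddSubgroup.closure s) : g ∣ ψ x - 1 := by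
  let π : S →* S ⧸ Ideal.span {g} := Ideal.Quotient.mk (Ideal.span {g})
  have π_eq_one_iff (a : S) : π a = 1 ↔ g ∣ a - 1 :=
    (Ideal.Quotient.mk_eq_one_iff_sub_mem a).trans Ideal.mem_span_singleton
  have closure_le_ker : AddSubgroup.closure s ≤ (π.compAddChar ψ).toAddMonoidHom.ker :=
    (AddSubgroup.closure_le _).2 fun y hy ↦ (π_eq_one_iff _).2 (hs y hy)
  exact (π_eq_one_iff _).1 (closure_le_ker hx)

/-- The character `(a, b) ↦ χ b • x ^ a` of `A × B` with values in the group algebra `R[A]`: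
the monomials of `R[A]` twisted by a character `χ` of `B`. For `A = ℤ ^ ν`, `B = ℤ / d` and
`χ k = ζ ^ k` it is the restriction to `H₁` of the map `σ : ℤ[H₁] → ℂ[ℤ ^ ν]`. -/
noncomputable def twistedMonomial {R A B : Type*} [Semiring R] [AddMonoid A] [AddMonoid B]
    (χ : AddChar B R) : AddChar (A × B) (AddMonoidAlgebra R A) where
  toFun x := AddMonoidAlgebra.single x.1 (χ x.2)
  map_zero_eq_one' := by
    rw [Prod.fst_zero, Prod.snd_zero, AddChar.map_zero_eq_one, AddMonoidAlgebra.one_def]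
  map_add_eq_mul' x y := by
    rw [Prod.fst_add, Prod.snd_add, AddChar.map_add_eq_mul, AddMonoidAlgebra.single_mul_single]

theorem isUnit_twistedMonomial_zero_sub_one {R A B : Type*} [Ring R] [AddMonoid A] [AddMonoid B]
    {χ : AddChar B R} {b : B} (hb : IsUnit (χ b - 1)) :
    IsUnit (twistedMonomial χ ((0, b) : A × B) - 1) := by
  have eq_constant : twistedMonomial χ ((0, b) : A × B) - 1 =
      AddMonoidAlgebra.singleZeroRingHom (χ b - 1) := by
    rw [map_sub, map_one]
    rfl
  exact eq_constant ▸ hb.map AddMonoidAlgebra.singleZeroRingHom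

theorem zmodChar_intCast {M : Type*} [DivisionCommMonoid M] {d : ℕ} [NeZero d] {ζ : M}
    (hζ : ζ ^ d = 1) (k : ℤ) : AddChar.zmodChar d hζ (k : ZMod d) = ζ ^ k := by
  have zmodChar_one : AddChar.zmodChar d hζ 1 = ζ := by
    simpa using AddChar.zmodChar_apply' hζ 1
  rw [← zsmul_one, AddChar.map_zsmul_eq_zpow, zmodChar_one]

theorem isUnit_zmodChar_one_sub_one {K : Type*} [Field K] {d : ℕ} [NeZero d] {ζ : K}
    (hζ : ζ ^ d = 1) (hζ_ne_one : ζ ≠ 1) : IsUnit (AddChar.zmodChar d hζ 1 - 1) := by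
  rw [← Int.cast_one, zmodChar_intCast, zpow_one]
  exact (sub_ne_zero.2 hζ_ne_one).isUnit

theorem common_divisor_isUnit_of_torsion_link_general {R A B ι : Type*} [CommRing R]
    [AddCommGroup A] [AddGroup B] (χ : AddChar B R) {b : B} (hb : IsUnit (χ b - 1))
    (h : ι → A) (n : ι → B)
    (hgen : (0, b) ∈ AddSubgroup.closure (Set.range fun i ↦ (h i, n i)))
    (g : AddMonoidAlgebra R A)
    (hg : ∀ i, g ∣ AddMonoidAlgebra.single (h i) (χ (n i)) - 1) :
    IsUnit g :=
  isUnit_of_dvd_unit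
    (dvd_addChar_sub_one_of_mem_closure (twistedMonomial χ) (Set.forall_mem_range.2 hg) hgen)
    (isUnit_twistedMonomial_zero_sub_one hb)

/-- Let `ν ≥ 1`, `d ≥ 2`, `ζ ∈ ℂ` a primitive `d`-th root of unity, and for `i = 1,…,m`
let `hᵢ ∈ ℤ^ν` and `nᵢ ∈ ℤ` be such that the elements `(hᵢ, nᵢ mod d)` generate
`ℤ^ν × ℤ/dℤ`.  Then in the group algebra `ℂ[ℤ^ν]`, every common divisor of the elements
`ζ^{nᵢ}·x^{hᵢ} − 1` is a unit. -/
theorem common_divisor_isUnit_of_torsion_link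
    (ν : ℕ) (hν : 1 ≤ ν) (d : ℕ) (hd : 2 ≤ d) (ζ : ℂ) (hζ : IsPrimitiveRoot ζ d)
    (m : ℕ) (h : Fin m → (Fin ν → ℤ)) (n : Fin m → ℤ)
    (hgen : AddSubgroup.closure (Set.range fun i => ((h i, (n i : ZMod d)) :
        (Fin ν → ℤ) × ZMod d)) = ⊤)
    (g : AddMonoidAlgebra ℂ (Fin ν → ℤ))
    (hg : ∀ i, g ∣ (AddMonoidAlgebra.single (h i) (ζ ^ (n i)) - 1)) :
    IsUnit g := by
  have : NeZero d := ⟨by omega⟩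
  exact common_divisor_isUnit_of_torsion_link_general (AddChar.zmodChar d hζ.pow_eq_one)
    (isUnit_zmodChar_one_sub_one _ (hζ.ne_one hd)) h _ (hgen ▸ AddSubgroup.mem_top _) g
    fun i ↦ (zmodChar_intCast hζ.pow_eq_one (n i)).symm ▸ hg i
end
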